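/- Let G and G' be two continuous concordance-inducing distribution functions, and let κ_G(C) and κ_{G'}(C) denote the corresponding G-transformed rank correlation coefficients evaluated at a bivariate copula C (i.e., κ_G(C) = ρ(G^{-1}(U1), G^{-1}(U2)) for (U1,U2) ~ C). If κ_G(C) = κ_{G'}(C) for all bivariate copulas C, then G and G' are of the same type. -/

import Mathlib

open MeasureTheory ProbabilityTheory Set

noncomputable section

/-- The uniform distribution on (0,1). -/
def unif01 : Measure ℝ := volume.restrict (Set.Ioo (0:ℝ) 1)

/-- Pearson's correlation coefficient of two real random variables. -/
def pearson {Ω : Type*} [MeasurableSpace Ω] (μ : Measure Ω) (Y1 Y2 : Ω → ℝ) : ℝ :=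
  ((∫ ω, Y1 ω * Y2 ω ∂μ) - (∫ ω, Y1 ω ∂μ) * (∫ ω, Y2 ω ∂μ)) /
    Real.sqrt (variance Y1 μ * variance Y2 μ)

/-- The distribution function (CDF) of a measure on ℝ. -/
def cdfOf (ν : Measure ℝ) : ℝ → ℝ := fun x => (ν (Set.Iic x)).toReal

/-- The quantile function (generalized inverse) of a distribution function. -/
def quantileFn (G : ℝ → ℝ) (p : ℝ) : ℝ := sInf {x : ℝ | p ≤ G x}

/-- The joint distribution function of a measure on ℝ². -/
def cdf2 (μ : Measure (ℝ × ℝ)) (u v : ℝ) : ℝ := (μ (Set.Iic u ×ˢ Set.Iic v)).toReal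

/-- A (bivariate) copula: the joint law of a random vector with uniform (0,1) margins. -/
structure IsCopula (μ : Measure (ℝ × ℝ)) : Prop where
  prob : IsProbabilityMeasure μ
  fst_marginal : μ.map Prod.fst = unif01
  snd_marginal : μ.map Prod.snd = unif01

/-- Two distributions on ℝ are of the same type. -/
def SameType (ν G : Measure ℝ) : Prop :=
  ∃ a b : ℝ, 0 < a ∧ ν = G.map (fun x => a * x + b)

/-- A distribution on ℝ is symmetric (about some point `m`). -/
def SymmetricDist (G : Measure ℝ) : Prop :=
  ∃ m : ℝ, G.map (fun x => 2 * m - x) = G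

/-- A distribution on ℝ is non-degenerate: it is not a point mass. -/
def Nondegenerate (G : Measure ℝ) : Prop := ∀ c : ℝ, G ≠ Measure.dirac c

/-- A distribution is concordance inducing: non-degenerate, symmetric,
with finite second moment. -/
def ConcordanceInducing (G : Measure ℝ) : Prop :=
  Nondegenerate G ∧ SymmetricDist G ∧ Integrable (fun x : ℝ => x ^ 2) G

/-- The G-transformed rank correlation coefficient of a copula:
`κ_G(C) = ρ(G⁻¹(U1), G⁻¹(U2))` for `(U1,U2) ~ C`. -/
def kappaG (G : Measure ℝ) (C : Measure (ℝ × ℝ)) : ℝ :=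
  pearson C (fun p => quantileFn (cdfOf G) p.1) (fun p => quantileFn (cdfOf G) p.2)

/-!
For a measurable set `s ⊆ (0, 1)` with centred indicator `a = 1_s - |s|`, the density
`1 + a(u) a(v)` defines a copula `C_s`, and `κ_G(C_s) = (∫_s Z)²`, where `Z` is the quantile
function of `G` standardized to mean zero and variance one. For `s = (t, 1)` the integral `∫_s Z` is
nonnegative because `Z` is monotone with mean zero, so the numbers `κ_G(C_s)` determine
`∫_(t, 1) Z` for every `t`, hence `Z` almost everywhere. Since `G` is the law of its quantile
function under the uniform distribution, `G` is determined up to location and scale.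
-/

section SetIntegral

variable {α : Type*} [MeasurableSpace α] {μ : Measure α}

lemma ae_eq_zero_of_forall_mem_piSystem_setIntegral_eq_zero {E : Type*} [NormedAddCommGroup E]
    [NormedSpace ℝ E] [CompleteSpace E] {f : α → E} {S : Set (Set α)}
    (hgen : ‹MeasurableSpace α› = MeasurableSpace.generateFrom S) (hS : IsPiSystem S)
    (hf : Integrable f μ) (huniv : ∫ x, f x ∂μ = 0) (hzero : ∀ s ∈ S, ∫ x in s, f x ∂μ = 0) :
    f =ᵐ[μ] 0 := by
  suffices h : ∀ s, MeasurableSet s → ∫ x in s, f x ∂μ = 0 from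
    hf.ae_eq_zero_of_forall_setIntegral_eq_zero fun s hs _ => h s hs
  intro s hs
  induction s, hs using MeasurableSpace.induction_on_inter hgen hS with
  | empty => exact setIntegral_empty
  | basic s hs => exact hzero s hs
  | compl s hs ih => rw [setIntegral_compl hs hf, ih, huniv, sub_zero]
  | iUnion s hdisj hs ih => rw [integral_iUnion hs hdisj hf.integrableOn]; simp only [ih, tsum_zero]

variable [LinearOrder α] {D : Set α} {f g : α → ℝ}

lemma setIntegral_nonneg_of_monotoneOn_of_integral_eq_zero {s : Set α} (hs : MeasurableSet s)
    (hupper : IsUpperSet s) (hD : ∀ᵐ x ∂μ, x ∈ D) (hmono : MonotoneOn f D) (hf : Integrable f μ)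
    (hzero : ∫ x, f x ∂μ = 0) : 0 ≤ ∫ x in s, f x ∂μ := by
  by_cases hpos : ∀ x ∈ s, x ∈ D → 0 ≤ f x
  · refine setIntegral_nonneg_of_ae_restrict ?_
    filter_upwards [ae_restrict_mem hs, ae_restrict_of_ae hD] with x hxs hxD using hpos x hxs hxD
  · push Not at hpos
    obtain ⟨x, hxs, hxD, hx⟩ := hpos
    have hcompl : ∫ y in sᶜ, f y ∂μ ≤ 0 := by
      refine setIntegral_nonpos_of_ae_restrict ?_
      filter_upwards [ae_restrict_mem hs.compl, ae_restrict_of_ae hD] with y hys hyD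
      have hyx : y ≤ x := (not_le.1 fun hxy => hys (hupper hxy hxs)).le
      exact (hmono hyD hxD hyx).trans hx.le
    linarith [integral_add_compl hs hf]

lemma ae_eq_of_forall_sq_setIntegral_Ioi_eq [TopologicalSpace α] [OrderTopology α]
    [SecondCountableTopology α] [BorelSpace α] (hD : ∀ᵐ x ∂μ, x ∈ D)
    (hf_mono : MonotoneOn f D) (hg_mono : MonotoneOn g D)
    (hf : Integrable f μ) (hg : Integrable g μ)
    (hf_zero : ∫ x, f x ∂μ = 0) (hg_zero : ∫ x, g x ∂μ = 0)
    (hsq : ∀ t, (∫ x in Ioi t, f x ∂μ) ^ 2 = (∫ x in Ioi t, g x ∂μ) ^ 2) : f =ᵐ[μ] g := by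
  have hIoi (t : α) : ∫ x in Ioi t, f x ∂μ = ∫ x in Ioi t, g x ∂μ :=
    (sq_eq_sq₀
      (setIntegral_nonneg_of_monotoneOn_of_integral_eq_zero measurableSet_Ioi (isUpperSet_Ioi t)
        hD hf_mono hf hf_zero)
      (setIntegral_nonneg_of_monotoneOn_of_integral_eq_zero measurableSet_Ioi (isUpperSet_Ioi t)
        hD hg_mono hg hg_zero)).1 (hsq t)
  refine Filter.eventuallyEq_iff_sub.2 <| ae_eq_zero_of_forall_mem_piSystem_setIntegral_eq_zero
    (BorelSpace.measurable_eq.trans (borel_eq_generateFrom_Ioi α)) isPiSystem_Ioi (hf.sub hg) ?_ ?_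
  · rw [integral_sub' hf hg, hf_zero, hg_zero, sub_zero]
  · rintro _ ⟨t, rfl⟩
    rw [integral_sub' hf.integrableOn hg.integrableOn, hIoi t, sub_self]

end SetIntegral

section Standardize

variable {Ω : Type*} [MeasurableSpace Ω]

/-- The standardization of a random variable `f` under `μ`: `f` centred at its mean and divided by
its standard deviation (identically zero when the variance is zero or infinite, as then
`variance f μ = 0` and `x / 0 = 0`). -/
def standardize (μ : Measure Ω) (f : Ω → ℝ) (ω : Ω) : ℝ :=
  (f ω - ∫ x, f x ∂μ) / √(variance f μ)

variable {μ : Measure Ω} {f g : Ω → ℝ}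

lemma monotoneOn_standardize [Preorder Ω] {D : Set Ω} (hf : MonotoneOn f D) :
    MonotoneOn (standardize μ f) D := fun _ hx _ hy hxy =>
  div_le_div_of_nonneg_right (sub_le_sub_right (hf hx hy hxy) _) (Real.sqrt_nonneg _)

lemma sqrt_variance_mul_standardize_add_integral (hvar : 0 < variance f μ) (ω : Ω) :
    √(variance f μ) * standardize μ f ω + ∫ x, f x ∂μ = f ω := by
  rw [standardize, mul_div_cancel₀ _ (Real.sqrt_pos.2 hvar).ne', sub_add_cancel]

lemma sameType_map_of_standardize_ae_eq (hg : AEMeasurable g μ) (hf_var : 0 < variance f μ)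
    (hg_var : 0 < variance g μ) (h : standardize μ f =ᵐ[μ] standardize μ g) :
    SameType (μ.map f) (μ.map g) := by
  let a := √(variance f μ) / √(variance g μ)
  refine ⟨a, (∫ x, f x ∂μ) - a * ∫ x, g x ∂μ,
    div_pos (Real.sqrt_pos.2 hf_var) (Real.sqrt_pos.2 hg_var), ?_⟩
  rw [AEMeasurable.map_map_of_aemeasurable (by fun_prop) hg]
  refine Measure.map_congr ?_
  filter_upwards [h] with ω hω
  rw [← sqrt_variance_mul_standardize_add_integral hf_var ω, hω, standardize, Function.comp_apply]
  ring

lemma integrable_standardize [IsFiniteMeasure μ] (hf : Integrable f μ) :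
    Integrable (standardize μ f) μ :=
  (hf.sub (integrable_const _)).div_const _

lemma setIntegral_standardize [IsFiniteMeasure μ] (hf : Integrable f μ) (s : Set Ω) :
    ∫ ω in s, standardize μ f ω ∂μ =
      ((∫ ω in s, f ω ∂μ) - μ.real s * ∫ ω, f ω ∂μ) / √(variance f μ) := by
  simp only [standardize]
  rw [integral_div, integral_sub hf.integrableOn (integrable_const _), setIntegral_const,
    smul_eq_mul]

lemma integral_standardize [IsProbabilityMeasure μ] (hf : Integrable f μ) :
    ∫ ω, standardize μ f ω ∂μ = 0 := by
  rw [← setIntegral_univ, setIntegral_standardize hf, setIntegral_univ, probReal_univ, one_mul,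
    sub_self, zero_div]

end Standardize

section CenteredIndicator

variable {Ω : Type*} [MeasurableSpace Ω]

/-- The indicator function of `s`, shifted to have mean zero under the probability measure `μ`. -/
def centeredIndicator (μ : Measure Ω) (s : Set Ω) (ω : Ω) : ℝ :=
  s.indicator 1 ω - μ.real s

variable {μ : Measure Ω} {s : Set Ω}

lemma measurable_centeredIndicator (hs : MeasurableSet s) : Measurable (centeredIndicator μ s) :=
  (measurable_one.indicator hs).sub_const _

lemma integral_mul_centeredIndicator {f : Ω → ℝ} (hs : MeasurableSet s) (hf : Integrable f μ) :
    ∫ ω, f ω * centeredIndicator μ s ω ∂μ = (∫ ω in s, f ω ∂μ) - μ.real s * ∫ ω, f ω ∂μ := by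
  have hmul (ω : Ω) : f ω * centeredIndicator μ s ω = s.indicator f ω - μ.real s * f ω := by
    by_cases h : ω ∈ s <;> simp [centeredIndicator, h] <;> ring
  simp only [hmul]
  rw [integral_sub (hf.indicator hs) (hf.const_mul _), integral_indicator hs, integral_const_mul]

variable [IsProbabilityMeasure μ]

lemma abs_centeredIndicator_le_one (ω : Ω) : |centeredIndicator μ s ω| ≤ 1 := by
  have h₀ : 0 ≤ μ.real s := measureReal_nonneg
  have h₁ : μ.real s ≤ 1 := measureReal_le_one
  rw [abs_le]
  by_cases h : ω ∈ s <;> simp [centeredIndicator, h] <;> linarith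

lemma integral_centeredIndicator (hs : MeasurableSet s) :
    ∫ ω, centeredIndicator μ s ω ∂μ = 0 := by
  simpa using integral_mul_centeredIndicator hs (integrable_const (μ := μ) (1 : ℝ))

end CenteredIndicator

section Sarmanov

variable {α β : Type*} [MeasurableSpace α] [MeasurableSpace β]

/-- The Sarmanov measure with margins `μ`, `ν` and kernels `a`, `b`: the perturbation of `μ.prod ν`
by the density `1 + a(x) b(y)`. It is a coupling of `μ` and `ν` when `a` and `b` are bounded by one
and have mean zero; the truncation by `ENNReal.ofReal` is then inactive. -/
def sarmanovMeasure (μ : Measure α) (ν : Measure β) (a : α → ℝ) (b : β → ℝ) : Measure (α × β) :=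
  (μ.prod ν).withDensity fun p => ENNReal.ofReal (1 + a p.1 * b p.2)

variable {μ : Measure α} {ν : Measure β} {a : α → ℝ} {b : β → ℝ}

lemma one_add_mul_nonneg_of_abs_le_one {x y : ℝ} (hx : |x| ≤ 1) (hy : |y| ≤ 1) :
    0 ≤ 1 + x * y := by
  have hxy : |x * y| ≤ 1 := abs_mul x y ▸ mul_le_one₀ hx (abs_nonneg y) hy
  linarith [neg_le_of_abs_le hxy]

lemma lintegral_ofReal_one_add_mul [IsProbabilityMeasure μ] (ha : Measurable a)
    (ha_le : ∀ x, |a x| ≤ 1) (ha_zero : ∫ x, a x ∂μ = 0) {c : ℝ} (hc : |c| ≤ 1) :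
    ∫⁻ x, ENNReal.ofReal (1 + c * a x) ∂μ = 1 := by
  have ha_int : Integrable a μ := .of_bound ha.aestronglyMeasurable 1 (ae_of_all _ ha_le)
  have hint : Integrable (fun x => 1 + c * a x) μ := (integrable_const _).add (ha_int.const_mul c)
  rw [← ofReal_integral_eq_lintegral_ofReal hint
      (ae_of_all _ fun x => one_add_mul_nonneg_of_abs_le_one hc (ha_le x)),
    integral_add (integrable_const _) (ha_int.const_mul c), integral_const_mul, ha_zero]
  simp

lemma measurable_sarmanov_density (ha : Measurable a) (hb : Measurable b) :
    Measurable fun p : α × β => ENNReal.ofReal (1 + a p.1 * b p.2) := by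
  fun_prop

lemma map_fst_sarmanovMeasure [SFinite μ] [IsProbabilityMeasure ν]
    (ha : Measurable a) (hb : Measurable b) (ha_le : ∀ x, |a x| ≤ 1) (hb_le : ∀ y, |b y| ≤ 1)
    (hb_zero : ∫ y, b y ∂ν = 0) :
    (sarmanovMeasure μ ν a b).map Prod.fst = μ := by
  ext s hs
  rw [Measure.map_apply measurable_fst hs, sarmanovMeasure, withDensity_apply _ (measurable_fst hs),
    ← prod_univ, ← Measure.prod_restrict,
    lintegral_prod _ (measurable_sarmanov_density ha hb).aemeasurable]
  simp [lintegral_ofReal_one_add_mul hb hb_le hb_zero (ha_le _)]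

lemma map_snd_sarmanovMeasure [IsProbabilityMeasure μ] [SFinite ν]
    (ha : Measurable a) (hb : Measurable b) (ha_le : ∀ x, |a x| ≤ 1) (hb_le : ∀ y, |b y| ≤ 1)
    (ha_zero : ∫ x, a x ∂μ = 0) :
    (sarmanovMeasure μ ν a b).map Prod.snd = ν := by
  ext s hs
  rw [Measure.map_apply measurable_snd hs, sarmanovMeasure, withDensity_apply _ (measurable_snd hs),
    ← univ_prod, ← Measure.prod_restrict,
    lintegral_prod_symm _ (measurable_sarmanov_density ha hb).aemeasurable]
  simp only [mul_comm (a _)]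
  simp [lintegral_ofReal_one_add_mul ha ha_le ha_zero (hb_le _)]

lemma integral_mul_sarmanovMeasure [SFinite μ] [SFinite ν] {f : α → ℝ} {g : β → ℝ}
    (ha : Measurable a) (hb : Measurable b) (ha_le : ∀ x, |a x| ≤ 1) (hb_le : ∀ y, |b y| ≤ 1)
    (hf : Integrable f μ) (hg : Integrable g ν) :
    ∫ p, f p.1 * g p.2 ∂sarmanovMeasure μ ν a b =
      (∫ x, f x ∂μ) * (∫ y, g y ∂ν) + (∫ x, f x * a x ∂μ) * ∫ y, g y * b y ∂ν := by
  have hfa : Integrable (fun x => f x * a x) μ :=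
    hf.mul_bdd (c := 1) ha.aestronglyMeasurable (ae_of_all _ ha_le)
  have hgb : Integrable (fun y => g y * b y) ν :=
    hg.mul_bdd (c := 1) hb.aestronglyMeasurable (ae_of_all _ hb_le)
  have hdensity (p : α × β) :
      (ENNReal.ofReal (1 + a p.1 * b p.2)).toReal • (f p.1 * g p.2) =
        f p.1 * g p.2 + f p.1 * a p.1 * (g p.2 * b p.2) := by
    rw [ENNReal.toReal_ofReal (one_add_mul_nonneg_of_abs_le_one (ha_le _) (hb_le _)), smul_eq_mul]
    ring
  rw [sarmanovMeasure, integral_withDensity_eq_integral_toReal_smul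
    (measurable_sarmanov_density ha hb) (ae_of_all _ fun _ => ENNReal.ofReal_lt_top)]
  simp only [hdensity]
  rw [integral_add (hf.mul_prod hg) (hfa.mul_prod hgb), integral_prod_mul f g,
    integral_prod_mul (fun x => f x * a x) (fun y => g y * b y)]

lemma pearson_sarmanovMeasure [IsProbabilityMeasure μ] [IsProbabilityMeasure ν]
    (ha : Measurable a) (hb : Measurable b) (ha_le : ∀ x, |a x| ≤ 1) (hb_le : ∀ y, |b y| ≤ 1)
    (ha_zero : ∫ x, a x ∂μ = 0) (hb_zero : ∫ y, b y ∂ν = 0) {f : α → ℝ} {g : β → ℝ}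
    (hf : Integrable f μ) (hg : Integrable g ν) :
    pearson (sarmanovMeasure μ ν a b) (fun p => f p.1) (fun p => g p.2) =
      (∫ x, f x * a x ∂μ) * (∫ y, g y * b y ∂ν) / √(variance f μ * variance g ν) := by
  have hfst := map_fst_sarmanovMeasure (μ := μ) ha hb ha_le hb_le hb_zero
  have hsnd := map_snd_sarmanovMeasure (ν := ν) ha hb ha_le hb_le ha_zero
  have hf' := hfst.symm ▸ hf.aestronglyMeasurable
  have hg' := hsnd.symm ▸ hg.aestronglyMeasurable
  have hf_mean : ∫ p, f p.1 ∂sarmanovMeasure μ ν a b = ∫ x, f x ∂μ := by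
    rw [← integral_map measurable_fst.aemeasurable hf', hfst]
  have hg_mean : ∫ p, g p.2 ∂sarmanovMeasure μ ν a b = ∫ y, g y ∂ν := by
    rw [← integral_map measurable_snd.aemeasurable hg', hsnd]
  have hf_var : variance (fun p => f p.1) (sarmanovMeasure μ ν a b) = variance f μ := by
    rw [← hfst, variance_map hf'.aemeasurable measurable_fst.aemeasurable, hfst]; rfl
  have hg_var : variance (fun p => g p.2) (sarmanovMeasure μ ν a b) = variance g ν := by
    rw [← hsnd, variance_map hg'.aemeasurable measurable_snd.aemeasurable, hsnd]; rfl
  rw [pearson, integral_mul_sarmanovMeasure ha hb ha_le hb_le hf hg, hf_mean, hg_mean, hf_var,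
    hg_var, add_sub_cancel_left]

end Sarmanov

lemma pearson_sarmanovMeasure_centeredIndicator {Ω : Type*} [MeasurableSpace Ω] {μ : Measure Ω}
    [IsProbabilityMeasure μ] {s : Set Ω} {f : Ω → ℝ} (hs : MeasurableSet s) (hf : Integrable f μ) :
    pearson (sarmanovMeasure μ μ (centeredIndicator μ s) (centeredIndicator μ s))
      (fun p => f p.1) (fun p => f p.2) = (∫ ω in s, standardize μ f ω ∂μ) ^ 2 := by
  have ha := measurable_centeredIndicator (μ := μ) hs
  have ha_zero := integral_centeredIndicator (μ := μ) hs
  rw [pearson_sarmanovMeasure ha ha abs_centeredIndicator_le_one abs_centeredIndicator_le_one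
    ha_zero ha_zero hf hf, integral_mul_centeredIndicator hs hf, setIntegral_standardize hf,
    div_pow, Real.sqrt_mul_self (variance_nonneg f μ), Real.sq_sqrt (variance_nonneg f μ), sq]

section Uniform

instance isProbabilityMeasure_unif01 : IsProbabilityMeasure unif01 :=
  ⟨by simp [unif01]⟩

lemma ae_unif01_mem_Ioo : ∀ᵐ p ∂unif01, p ∈ Ioo (0 : ℝ) 1 :=
  ae_restrict_mem measurableSet_Ioo

lemma unif01_Iic {t : ℝ} (ht : t ≤ 1) : unif01 (Iic t) = ENNReal.ofReal t := by
  have hIoc : Iic t ∩ Ioc (0 : ℝ) 1 = Ioc 0 t := by grind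
  rw [unif01, restrict_Ioo_eq_restrict_Ioc, Measure.restrict_apply measurableSet_Iic, hIoc,
    Real.volume_Ioc, sub_zero]

lemma isCopula_sarmanovMeasure {a b : ℝ → ℝ} (ha : Measurable a) (hb : Measurable b)
    (ha_le : ∀ x, |a x| ≤ 1) (hb_le : ∀ y, |b y| ≤ 1) (ha_zero : ∫ x, a x ∂unif01 = 0)
    (hb_zero : ∫ y, b y ∂unif01 = 0) : IsCopula (sarmanovMeasure unif01 unif01 a b) := by
  have hfst := map_fst_sarmanovMeasure (μ := unif01) ha hb ha_le hb_le hb_zero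
  refine ⟨⟨?_⟩, hfst, map_snd_sarmanovMeasure ha hb ha_le hb_le ha_zero⟩
  rw [← preimage_univ (f := Prod.fst), ← Measure.map_apply measurable_fst MeasurableSet.univ, hfst,
    measure_univ]

end Uniform

section Quantile

lemma quantileFn_le_iff (F : StieltjesFunction ℝ) {p : ℝ} (hne : ∃ x, p ≤ F x)
    (hlt : ∃ x, F x < p) (x : ℝ) : quantileFn F p ≤ x ↔ p ≤ F x := by
  have hbdd : BddBelow {x | p ≤ F x} := by
    obtain ⟨y, hy⟩ := hlt
    exact ⟨y, fun z hz => (F.mono.reflect_lt (hy.trans_le hz)).le⟩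
  have hright : ∀ y, quantileFn F p < y → p ≤ F y := fun y hy => by
    obtain ⟨z, hz, hzy⟩ := (csInf_lt_iff hbdd hne).1 hy
    exact hz.trans (F.mono hzy.le)
  refine ⟨fun h => ?_, fun h => csInf_le hbdd h⟩
  have htendsto := (F.right_continuous x).mono Ioi_subset_Ici_self
  exact ge_of_tendsto htendsto <|
    eventually_nhdsWithin_of_forall fun y hy => hright y (h.trans_lt hy)

variable (ν : Measure ℝ) [IsProbabilityMeasure ν]

lemma cdfOf_eq_cdf : cdfOf ν = cdf ν :=
  funext fun x => (cdf_eq_real ν x).symm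

lemma quantileFn_cdfOf_le_iff {p : ℝ} (hp : p ∈ Ioo (0 : ℝ) 1) (x : ℝ) :
    quantileFn (cdfOf ν) p ≤ x ↔ p ≤ cdfOf ν x := by
  rw [cdfOf_eq_cdf]
  exact quantileFn_le_iff (cdf ν)
    (((tendsto_cdf_atTop ν).eventually_const_le hp.2).exists)
    (((tendsto_cdf_atBot ν).eventually_lt_const hp.1).exists) x

lemma monotoneOn_quantileFn_cdfOf : MonotoneOn (quantileFn (cdfOf ν)) (Ioo 0 1) := by
  intro p hp q hq hpq
  rw [quantileFn_cdfOf_le_iff ν hp]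
  exact hpq.trans ((quantileFn_cdfOf_le_iff ν hq _).1 le_rfl)

lemma aemeasurable_quantileFn_cdfOf : AEMeasurable (quantileFn (cdfOf ν)) unif01 :=
  aemeasurable_restrict_of_monotoneOn measurableSet_Ioo (monotoneOn_quantileFn_cdfOf ν)

lemma map_quantileFn_cdfOf_unif01 : unif01.map (quantileFn (cdfOf ν)) = ν := by
  have hmeas := aemeasurable_quantileFn_cdfOf ν
  have := Measure.isProbabilityMeasure_map hmeas
  refine Measure.ext_of_Iic _ _ fun x => ?_
  have hpreimage : quantileFn (cdfOf ν) ⁻¹' Iic x =ᵐ[unif01] Iic (cdfOf ν x) := by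
    filter_upwards [ae_unif01_mem_Ioo] with p hp using propext (quantileFn_cdfOf_le_iff ν hp x)
  rw [Measure.map_apply_of_aemeasurable hmeas measurableSet_Iic, measure_congr hpreimage,
    cdfOf_eq_cdf, unif01_Iic (cdf_le_one ν x), ofReal_cdf]

variable {ν}

lemma memLp_two_quantileFn_cdfOf (hν : Integrable (fun x : ℝ => x ^ 2) ν) :
    MemLp (quantileFn (cdfOf ν)) 2 unif01 := by
  have hmeas := aemeasurable_quantileFn_cdfOf ν
  rw [memLp_two_iff_integrable_sq hmeas.aestronglyMeasurable]
  rw [← map_quantileFn_cdfOf_unif01 ν] at hν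
  exact (integrable_map_measure (by fun_prop) hmeas).1 hν

lemma variance_quantileFn_cdfOf_pos (hν : Integrable (fun x : ℝ => x ^ 2) ν)
    (hnondeg : Nondegenerate ν) : 0 < variance (quantileFn (cdfOf ν)) unif01 := by
  refine (variance_nonneg _ _).lt_of_ne' fun hzero => ?_
  have hconst := ae_eq_integral_of_variance_eq_zero (memLp_two_quantileFn_cdfOf hν) hzero
  apply hnondeg (∫ p, quantileFn (cdfOf ν) p ∂unif01)
  conv_lhs => rw [← map_quantileFn_cdfOf_unif01 ν]
  rw [Measure.map_congr hconst, Measure.map_const, measure_univ, one_smul]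

end Quantile

theorem uniqueness_of_G_functions_general
    (ν ν' : Measure ℝ) [IsProbabilityMeasure ν] [IsProbabilityMeasure ν']
    (hnondeg : Nondegenerate ν) (hnondeg' : Nondegenerate ν')
    (hν : Integrable (fun x : ℝ => x ^ 2) ν) (hν' : Integrable (fun x : ℝ => x ^ 2) ν')
    (heq : ∀ C : Measure (ℝ × ℝ), IsCopula C → kappaG ν C = kappaG ν' C) :
    SameType ν ν' := by
  have hint := (memLp_two_quantileFn_cdfOf hν).integrable one_le_two
  have hint' := (memLp_two_quantileFn_cdfOf hν').integrable one_le_two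
  have hsq (t : ℝ) : (∫ p in Ioi t, standardize unif01 (quantileFn (cdfOf ν)) p ∂unif01) ^ 2 =
      (∫ p in Ioi t, standardize unif01 (quantileFn (cdfOf ν')) p ∂unif01) ^ 2 := by
    have ha := measurable_centeredIndicator (μ := unif01) (measurableSet_Ioi (a := t))
    have ha_zero := integral_centeredIndicator (μ := unif01) (measurableSet_Ioi (a := t))
    rw [← pearson_sarmanovMeasure_centeredIndicator measurableSet_Ioi hint,
      ← pearson_sarmanovMeasure_centeredIndicator measurableSet_Ioi hint']
    exact heq _ (isCopula_sarmanovMeasure ha ha abs_centeredIndicator_le_one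
      abs_centeredIndicator_le_one ha_zero ha_zero)
  have hstd := ae_eq_of_forall_sq_setIntegral_Ioi_eq ae_unif01_mem_Ioo
    (monotoneOn_standardize (monotoneOn_quantileFn_cdfOf ν))
    (monotoneOn_standardize (monotoneOn_quantileFn_cdfOf ν'))
    (integrable_standardize hint) (integrable_standardize hint')
    (integral_standardize hint) (integral_standardize hint') hsq
  rw [← map_quantileFn_cdfOf_unif01 ν, ← map_quantileFn_cdfOf_unif01 ν']
  exact sameType_map_of_standardize_ae_eq (aemeasurable_quantileFn_cdfOf ν')
    (variance_quantileFn_cdfOf_pos hν hnondeg) (variance_quantileFn_cdfOf_pos hν' hnondeg') hstd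

/-- uniqueness of G-functions. If two continuous concordance-inducing
distribution functions `G, G'` give the same transformed rank correlation on all
bivariate copulas, then `G` and `G'` are of the same type. -/
theorem uniqueness_of_G_functions
    (ν ν' : Measure ℝ) [IsProbabilityMeasure ν] [IsProbabilityMeasure ν']
    (hcont : Continuous (cdfOf ν)) (hcont' : Continuous (cdfOf ν'))
    (hG : ConcordanceInducing ν) (hG' : ConcordanceInducing ν')
    (heq : ∀ C : Measure (ℝ × ℝ), IsCopula C → kappaG ν C = kappaG ν' C) :
    SameType ν ν' := by
  exact uniqueness_of_G_functions_general ν ν' hG.1 hG'.1 hG.2.2 hG'.2.2 heq
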